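/- (Corollary 8) Suppose n is odd, λ = 1/2, p ≥ 1, and let φ ∈ A^d be ξ-homogeneous of degree d. Then there exists an element L ∈ W (a differential operator with polynomial coefficients, depending on φ, p) such that for all ψ ∈ A: (∏_{i=1}^{⌊p/2⌋} (E' + i)(E' + p − d − i))(C^{1/2}_p(φ, ψ)) = Lψ; that is, C^{1/2}_p(φ, ·) = [∏_{i=1}^{⌊p/2⌋} (E'+i)(E'−i+p−d)]^{−1} ∘ L. -/

import Mathlib

open MvPolynomial

/-- The polynomial symbol algebra `A = ℂ[u₁,…,uₙ,ξ₁,…,ξₙ]`: variables `Sum.inl i` are the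
`uᵢ` and variables `Sum.inr i` are the `ξᵢ`. -/
abbrev PolA (n : ℕ) := MvPolynomial (Fin n ⊕ Fin n) ℂ

namespace LO

/-- ξ-degree of a monomial exponent. -/
def xiDeg {n : ℕ} (d : (Fin n ⊕ Fin n) →₀ ℕ) : ℕ :=
  ∑ i : Fin n, d (Sum.inr i)

/-- `c(E)`: the operator multiplying the ξ-degree-`m` component by `c m`. -/
noncomputable def cE {n : ℕ} (c : ℕ → ℂ) (φ : PolA n) : PolA n :=
  ∑ d ∈ φ.support, monomial d (c (xiDeg d) * coeff d φ)

/-- `D = Σᵢ ∂²/∂uᵢ∂ξᵢ`. -/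
noncomputable def Dop {n : ℕ} (φ : PolA n) : PolA n :=
  ∑ i : Fin n, pderiv (Sum.inl i) (pderiv (Sum.inr i) φ)

/-- The scalar `h^λ_d(m)`. -/
noncomputable def hScal (n : ℕ) (lam : ℂ) (d m : ℕ) : ℂ :=
  (d.factorial : ℂ)⁻¹ *
    ∏ j ∈ Finset.range d,
      ((m : ℂ) + (j : ℂ) + lam * ((n : ℂ) + 1)) /
        (2 * (m : ℂ) + (j : ℂ) + (n : ℂ) + (d : ℂ))

/-- The scalar `g^λ_d(m)`. -/
noncomputable def gScal (n : ℕ) (lam : ℂ) (d m : ℕ) : ℂ :=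
  (d.factorial : ℂ)⁻¹ *
    ∏ j ∈ Finset.range d,
      (-(m : ℂ) - (j : ℂ) - lam * ((n : ℂ) + 1)) /
        (2 * (m : ℂ) + (j : ℂ) + (n : ℂ) + 1)

/-- `bh^λ_d = h^λ_d(E) ∘ D^d` (equal to the identity for `d = 0`). -/
noncomputable def bh {n : ℕ} (lam : ℂ) (d : ℕ) (φ : PolA n) : PolA n :=
  cE (hScal n lam d) (Dop^[d] φ)

/-- `bg^λ_d = g^λ_d(E) ∘ D^d` (equal to the identity for `d = 0`). -/
noncomputable def bg {n : ℕ} (lam : ℂ) (d : ℕ) (φ : PolA n) : PolA n :=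
  cE (gScal n lam d) (Dop^[d] φ)

/-- `N_k(φ,ψ) = (1/k!) Σ_{α ∈ {1,…,n}^k} ∂^kφ/∂ξ_α · ∂^kψ/∂u_α`. -/
noncomputable def Nop {n : ℕ} (k : ℕ) (φ ψ : PolA n) : PolA n :=
  (k.factorial : ℂ)⁻¹ •
    ∑ α : Fin k → Fin n,
      ((List.ofFn α).foldr (fun i acc => pderiv (Sum.inr i) acc) φ) *
      ((List.ofFn α).foldr (fun i acc => pderiv (Sum.inl i) acc) ψ)

/-- The coefficient `C^λ_p` of the Lecomte–Ovsienko star product. -/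
noncomputable def C (n : ℕ) (lam : ℂ) (p : ℕ) (φ ψ : PolA n) : PolA n :=
  ∑ i ∈ Finset.range (p + 1), ∑ j ∈ Finset.range (p + 1),
    ∑ k ∈ Finset.range (p + 1), ∑ m ∈ Finset.range (p + 1),
      if i + j + k + m = p then bg lam m (Nop k (bh lam i φ) (bh lam j ψ)) else 0

/-- The Poisson bracket `{φ,ψ}`. -/
noncomputable def pb {n : ℕ} (φ ψ : PolA n) : PolA n :=
  ∑ i : Fin n,
    (pderiv (Sum.inr i) φ * pderiv (Sum.inl i) ψ
      - pderiv (Sum.inl i) φ * pderiv (Sum.inr i) ψ)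

/-- `φ ∈ A^m` (ξ-homogeneous of degree `m`; for `m < 0` this forces `φ = 0`). -/
def IsXiHomog {n : ℕ} (m : ℤ) (φ : PolA n) : Prop :=
  ∀ d ∈ φ.support, (xiDeg d : ℤ) = m

/-- The set of spanning momentum functions of the projective `sl_{n+1}(ℝ)`-action. -/
noncomputable def momSet (n : ℕ) : Set (PolA n) :=
  (Set.range fun i : Fin n => (X (Sum.inr i) : PolA n)) ∪
  (Set.range fun ij : Fin n × Fin n =>
    (X (Sum.inl ij.1) * X (Sum.inr ij.2) : PolA n)) ∪
  (Set.range fun i : Fin n =>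
    (X (Sum.inl i) * ∑ k : Fin n, X (Sum.inl k) * X (Sum.inr k) : PolA n))

/-- The span `M` of the momentum functions. -/
noncomputable def momSpan (n : ℕ) : Submodule ℂ (PolA n) := Submodule.span ℂ (momSet n)

/-- The Weyl algebra `W` of differential operators with polynomial coefficients,
as a subalgebra of `End_ℂ(A)`. -/
noncomputable def Weyl (n : ℕ) : Subalgebra ℂ (Module.End ℂ (PolA n)) :=
  Algebra.adjoin ℂ
    ((Set.range fun i : Fin n =>
        (LinearMap.mulLeft ℂ (X (Sum.inl i)) : Module.End ℂ (PolA n))) ∪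
     (Set.range fun i : Fin n =>
        (LinearMap.mulLeft ℂ (X (Sum.inr i)) : Module.End ℂ (PolA n))) ∪
     (Set.range fun v : Fin n ⊕ Fin n =>
        ((pderiv v).toLinearMap : Module.End ℂ (PolA n))))

/-- A bilinear map `B : A × A → A` is bidifferential if it is a finite sum
`B(φ,ψ) = Σ_α A_α(φ)·B_α(ψ)` with `A_α, B_α` in the Weyl algebra. -/
def Bidiff (n : ℕ) (B : PolA n → PolA n → PolA n) : Prop :=
  ∃ (N : ℕ) (Aop Bop : Fin N → Weyl n),
    ∀ φ ψ : PolA n,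
      B φ ψ = ∑ α : Fin N,
        (Aop α : Module.End ℂ (PolA n)) φ * (Bop α : Module.End ℂ (PolA n)) ψ

/-- The scalar by which `T_p = ∏_{i=1}^{⌊p/2⌋}(E'+i)` acts on `A^m`. -/
noncomputable def TScal (n p m : ℕ) : ℂ :=
  ∏ i ∈ Finset.Icc 1 (p / 2), ((m : ℂ) + (n : ℂ) / 2 + (i : ℂ))

/-- The scalar by which `S_p = ∏_{i=1}^{⌊p/2⌋}(E'−i)` acts on `A^m`. -/
noncomputable def SScal (n p m : ℕ) : ℂ :=
  ∏ i ∈ Finset.Icc 1 (p / 2), ((m : ℂ) + (n : ℂ) / 2 - (i : ℂ))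

/-- The operator `T_p`. -/
noncomputable def Tp (n p : ℕ) : PolA n → PolA n := cE (TScal n p)

/-- The operator `S_p`. -/
noncomputable def Sp (n p : ℕ) : PolA n → PolA n := cE (SScal n p)

/-- The fiberwise Euler operator `E = Σ ξᵢ ∂/∂ξᵢ` as an endomorphism. -/
noncomputable def Elin (n : ℕ) : Module.End ℂ (PolA n) :=
  ∑ i : Fin n,
    (LinearMap.mulLeft ℂ (X (Sum.inr i)) : Module.End ℂ (PolA n)) ∘ₗ
      (pderiv (Sum.inr i)).toLinearMap

/-- `E' = E + n/2` as an endomorphism. -/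
noncomputable def E'lin (n : ℕ) : Module.End ℂ (PolA n) :=
  Elin n + ((n : ℂ) / 2) • 1

/-- `D` as an endomorphism. -/
noncomputable def Dlin (n : ℕ) : Module.End ℂ (PolA n) :=
  ∑ i : Fin n,
    ((pderiv (Sum.inl i)).toLinearMap : Module.End ℂ (PolA n)) ∘ₗ
      (pderiv (Sum.inr i)).toLinearMap

/-- `L^{(m)} = −(1/16)(ξ_m∘D − 2E'∘∂/∂u_m)∘D`. -/
noncomputable def Lop (n : ℕ) (m : Fin n) : Module.End ℂ (PolA n) :=
  (-(1 / 16 : ℂ)) •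
    (((LinearMap.mulLeft ℂ (X (Sum.inr m)) : Module.End ℂ (PolA n)) ∘ₗ Dlin n
        - (2 : ℂ) • (E'lin n ∘ₗ (pderiv (Sum.inl m)).toLinearMap)) ∘ₗ Dlin n)

end LO

/-!
Each summand of `C^{1/2}_p(φ, ·)` is `bg_m ∘ M ∘ bh_j`, where `M` is a differential operator of
ξ-weight `d - i - k` and `i + j + k + m = p`. At `λ = 1/2` the coefficients of `bg_m` and `bh_j`
are, up to constants, products of `(y + r + 1/2) / (2 y + r + a)` with `y` the eigenvalue of `E'`.
The numerators cancel every denominator `2 y + l` with `l` odd, the factors `E' + i` cancel the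
even denominators of `bg_m`, and `∏ (E' + j - i)` cancels those of `bh_j`. An operator of weight `w`
intertwines `f(E')` with `f(E' + w)`, so the factors `E' + p - d - i`, moved from the left of
`bg_m ∘ M` to its right, become exactly `E' + j - i`.
-/

section AdEigenspace

variable {R A : Type*} [CommRing R] [Ring A] [Algebra R A]

/-- The elements `m` of an associative algebra with `[x, m] = a m`: the eigenspace of the inner
derivation `ad x` for the eigenvalue `a`. -/
def adEigenspace (x : A) (a : R) : Submodule R A :=
  Module.End.eigenspace (LinearMap.mulLeft R x - LinearMap.mulRight R x) a

theorem mem_adEigenspace_iff {x m : A} {a : R} : m ∈ adEigenspace x a ↔ ⁅x, m⁆ = a • m := by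
  rw [adEigenspace, Module.End.mem_eigenspace_iff, LinearMap.sub_apply, LinearMap.mulLeft_apply,
    LinearMap.mulRight_apply, Ring.lie_def]

theorem mem_adEigenspace_zero_iff {x m : A} : m ∈ adEigenspace x (0 : R) ↔ Commute x m := by
  rw [mem_adEigenspace_iff, zero_smul, commute_iff_lie_eq]

theorem adEigenspace_add_algebraMap (x : A) (r a : R) :
    adEigenspace (x + algebraMap R A r) a = adEigenspace x a := by
  ext m
  rw [mem_adEigenspace_iff, mem_adEigenspace_iff, Ring.lie_def, Ring.lie_def, add_mul, mul_add,
    Algebra.commutes, add_sub_add_right_eq_sub]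

theorem mul_mem_adEigenspace {x m m' : A} {a b : R} (hm : m ∈ adEigenspace x a)
    (hm' : m' ∈ adEigenspace x b) : m * m' ∈ adEigenspace x (a + b) := by
  rw [mem_adEigenspace_iff] at *
  calc ⁅x, m * m'⁆ = ⁅x, m⁆ * m' + m * ⁅x, m'⁆ := by simp only [Ring.lie_def]; noncomm_ring
    _ = (a + b) • (m * m') := by rw [hm, hm', smul_mul_assoc, mul_smul_comm, add_smul]

theorem list_prod_mem_adEigenspace {x : A} {a : R} (l : List A)
    (h : ∀ m ∈ l, m ∈ adEigenspace x a) :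
    l.prod ∈ adEigenspace x (l.length * a) := by
  induction l with
  | nil => simp [mem_adEigenspace_zero_iff]
  | cons m l ih =>
    rw [List.forall_mem_cons] at h
    have hml := mul_mem_adEigenspace h.1 (ih h.2)
    rwa [← List.prod_cons, ← one_add_mul, add_comm, ← Nat.cast_add_one, ← List.length_cons] at hml

theorem pow_mem_adEigenspace {x m : A} {a : R} (hm : m ∈ adEigenspace x a) (k : ℕ) :
    m ^ k ∈ adEigenspace x (k * a) := by
  simpa using list_prod_mem_adEigenspace (List.replicate k m) fun _ h =>
    List.eq_of_mem_replicate h ▸ hm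

theorem aeval_mul_of_mem_adEigenspace {x m : A} {a : R} (hm : m ∈ adEigenspace x a)
    (f : Polynomial R) :
    Polynomial.aeval x f * m = m * Polynomial.aeval x (Polynomial.taylor a f) := by
  have hx : x * m = m * (x + algebraMap R A a) := by
    rw [mem_adEigenspace_iff, Ring.lie_def, sub_eq_iff_eq_add'] at hm
    rw [hm, mul_add, Algebra.algebraMap_eq_smul_one, mul_smul_comm, mul_one]
  rw [Polynomial.taylor_apply, Polynomial.aeval_comp, map_add, Polynomial.aeval_X,
    Polynomial.aeval_C]
  induction f using Polynomial.induction_on' with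
  | add f g hf hg => rw [map_add, map_add, add_mul, mul_add, hf, hg]
  | monomial k c =>
    have hpow : x ^ k * m = m * (x + algebraMap R A a) ^ k :=
      ((show SemiconjBy m _ x from hx.symm).pow_right k).eq.symm
    rw [Polynomial.aeval_monomial, Polynomial.aeval_monomial, mul_assoc, hpow, ← mul_assoc,
      Algebra.commutes, mul_assoc]

end AdEigenspace

section EndEigenspace

variable {R V : Type*} [CommRing R] [AddCommGroup V] [Module R V]

theorem apply_mem_eigenspace_add {x M : Module.End R V} {a b : R} {v : V}
    (hM : M ∈ adEigenspace x a) (hv : v ∈ x.eigenspace b) : M v ∈ x.eigenspace (a + b) := by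
  rw [Module.End.mem_eigenspace_iff] at *
  have hMv := LinearMap.congr_fun (mem_adEigenspace_iff.mp hM) v
  rw [Ring.lie_def, LinearMap.sub_apply, Module.End.mul_apply, Module.End.mul_apply, hv, map_smul,
    LinearMap.smul_apply, sub_eq_iff_eq_add] at hMv
  rw [hMv, add_smul]

end EndEigenspace

section Cancellation

variable {K : Type*} [Field K]

theorem exists_eval_eq_div_prod {ι : Type*} (s : Finset ι) {r : ι → K}
    (hr : Function.Injective r) (N : Polynomial K) (hN : ∀ i ∈ s, N.IsRoot (r i)) :
    ∃ f : Polynomial K, ∀ y, (∀ i ∈ s, y - r i ≠ 0) →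
      f.eval y = N.eval y / ∏ i ∈ s, (y - r i) := by
  obtain ⟨f, rfl⟩ : ∏ i ∈ s, (Polynomial.X - Polynomial.C (r i)) ∣ N :=
    Finset.prod_dvd_of_coprime ((Polynomial.pairwise_coprime_X_sub_C hr).set_pairwise _)
      fun i hi => Polynomial.dvd_iff_isRoot.mpr (hN i hi)
  refine ⟨f, fun y hy => ?_⟩
  simp only [Polynomial.eval_mul, Polynomial.eval_prod, Polynomial.eval_sub, Polynomial.eval_X,
    Polynomial.eval_C]
  rw [mul_div_cancel_left₀ _ (Finset.prod_ne_zero_iff.mpr hy)]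

/-- The product `∏_{j < m} (y + j + 1/2) / (2 y + j + a)`. For `λ = 1/2` both scalars `g^λ_m` and
`h^λ_m` are constant multiples of it, with `y` the eigenvalue of `E'` and `a = 1`, respectively
`a = m`. -/
def halfRatio (a m : ℕ) (y : K) : K :=
  ∏ j ∈ Finset.range m, (y + j + 1 / 2) / (2 * y + j + a)

/- The numerator of `halfRatio a m` vanishes at `-l / 2` for each odd `l < 2 m`, so only the even
denominators `2 y + 2 t` have to be cancelled by `F`. -/
theorem exists_eval_eq_mul_halfRatio [CharZero K] {a m : ℕ} (ha : a ≤ m + 1) (F : Polynomial K)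
    (hF : ∀ t : ℕ, a ≤ 2 * t → 2 * t < a + m → F.IsRoot (-t)) :
    ∃ f : Polynomial K, ∀ y : K, (∀ j < m, 2 * y + j + a ≠ 0) →
      f.eval y = F.eval y * halfRatio a m y := by
  let N : Polynomial K :=
    ∏ j ∈ Finset.range m, (Polynomial.X + Polynomial.C ((j : K) + 1 / 2))
  have hN (y : K) : N.eval y = ∏ j ∈ Finset.range m, (y + j + 1 / 2) := by
    simp only [N, Polynomial.eval_prod, Polynomial.eval_add, Polynomial.eval_X, Polynomial.eval_C,
      add_assoc]
  have hroot : ∀ j ∈ Finset.range m, (F * N).IsRoot (-(((j + a : ℕ) : K) / 2)) := by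
    intro j hj
    rw [Finset.mem_range] at hj
    rw [Polynomial.IsRoot.def, Polynomial.eval_mul, mul_eq_zero]
    rcases Nat.even_or_odd' (j + a) with ⟨t, ht | ht⟩
    · left
      have ht' : -(((j + a : ℕ) : K) / 2) = -t := by rw [ht]; push_cast; ring
      rw [ht', (hF t (by lia) (by lia)).eq_zero]
    · right
      rw [hN]
      refine Finset.prod_eq_zero (i := t) (Finset.mem_range.mpr (by lia)) ?_
      rw [ht]; push_cast; ring
  have hinj : Function.Injective fun j : ℕ => -(((j + a : ℕ) : K) / 2) := fun i j h => by
    simpa using h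
  obtain ⟨f, hf⟩ := exists_eval_eq_div_prod (Finset.range m) hinj (F * N) hroot
  have hden (y : K) (j : ℕ) : 2 * y + j + a = 2 * (y - -(((j + a : ℕ) : K) / 2)) := by
    push_cast; ring
  refine ⟨Polynomial.C ((2 ^ m)⁻¹) * f, fun y hy => ?_⟩
  have hy' : ∀ j ∈ Finset.range m, y - -(((j + a : ℕ) : K) / 2) ≠ 0 := fun j hj h =>
    hy j (Finset.mem_range.mp hj) (by rw [hden, h, mul_zero])
  rw [Polynomial.eval_mul, Polynomial.eval_C, hf y hy', Polynomial.eval_mul, hN, halfRatio,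
    Finset.prod_div_distrib]
  simp only [hden, Finset.prod_mul_distrib, Finset.prod_const, Finset.card_range]
  ring

end Cancellation

namespace LO

section FunctionalCalculus

variable {n : ℕ}

theorem coeff_cE (c : ℕ → ℂ) (φ : PolA n) (s : (Fin n ⊕ Fin n) →₀ ℕ) :
    coeff s (cE c φ) = c (xiDeg s) * coeff s φ := by
  classical
  simp only [cE, coeff_sum, coeff_monomial, Finset.sum_ite_eq']
  split_ifs with hs
  · rfl
  · rw [notMem_support_iff.mp hs, mul_zero]

/-- The functional calculus `c ↦ c(E)`, as an algebra homomorphism from scalar functions with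
pointwise multiplication. -/
noncomputable def cEHom (n : ℕ) : (ℕ → ℂ) →ₐ[ℂ] Module.End ℂ (PolA n) :=
  AlgHom.ofLinearMap
    { toFun := fun c =>
        { toFun := cE c
          map_add' := fun φ ψ => by ext s; simp only [coeff_cE, coeff_add, mul_add]
          map_smul' := fun r φ => by
            ext s; simp only [coeff_cE, coeff_smul, smul_eq_mul, RingHom.id_apply]; ring }
      map_add' := fun c c' => by
        ext1 φ; ext s; simp [coeff_cE, add_mul]
      map_smul' := fun r c => by
        ext1 φ; ext s; simp [coeff_cE, mul_assoc] }
    (by ext1 φ; ext s; simp [coeff_cE])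
    (fun c c' => by ext1 φ; ext s; simp [coeff_cE, mul_assoc])

theorem cEHom_apply (c : ℕ → ℂ) (φ : PolA n) : cEHom n c φ = cE c φ := rfl

theorem Elin_monomial (s : (Fin n ⊕ Fin n) →₀ ℕ) (a : ℂ) :
    Elin n (monomial s a) = (xiDeg s : ℂ) • monomial s a := by
  simp only [Elin, LinearMap.sum_apply, LinearMap.comp_apply, LinearMap.mulLeft_apply,
    Derivation.coeFn_coe, X_mul_pderiv_monomial, xiDeg, ← Finset.sum_smul, Nat.cast_smul_eq_nsmul]

theorem Elin_eq_cEHom : Elin n = cEHom n (fun k => (k : ℂ)) := by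
  classical
  refine LinearMap.ext fun φ => ?_
  induction φ using MvPolynomial.induction_on' with
  | monomial s a =>
    ext t
    rw [Elin_monomial, cEHom_apply, coeff_cE, coeff_smul, coeff_monomial, smul_eq_mul]
    split_ifs with hst
    · rw [hst]
    · rw [mul_zero, mul_zero]
  | add φ ψ hφ hψ => rw [map_add, map_add, hφ, hψ]

theorem E'lin_eq_add_algebraMap : E'lin n = Elin n + algebraMap ℂ _ ((n : ℂ) / 2) := by
  rw [E'lin, Algebra.algebraMap_eq_smul_one]

theorem E'lin_eq_cEHom : E'lin n = cEHom n (fun k => (k : ℂ) + n / 2) := by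
  rw [E'lin_eq_add_algebraMap, Elin_eq_cEHom, ← (cEHom n).commutes, ← map_add]
  rfl

theorem aeval_E'lin (f : Polynomial ℂ) :
    Polynomial.aeval (E'lin n) f = cEHom n (fun k => f.eval ((k : ℂ) + n / 2)) := by
  rw [E'lin_eq_cEHom, Polynomial.aeval_algHom_apply]
  congr 1
  funext k
  simp [Polynomial.aeval_pi]

end FunctionalCalculus

section Weights

variable {n : ℕ}

theorem isXiHomog_iff_mem_eigenspace {m : ℤ} {φ : PolA n} :
    IsXiHomog m φ ↔ φ ∈ (Elin n).eigenspace (m : ℂ) := by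
  simp only [Module.End.mem_eigenspace_iff, Elin_eq_cEHom, cEHom_apply, MvPolynomial.ext_iff,
    coeff_cE, coeff_smul, smul_eq_mul, IsXiHomog, mem_support_iff]
  refine forall_congr' fun s => ?_
  rw [mul_eq_mul_right_iff, or_iff_not_imp_right]
  norm_cast

/-- The fiberwise Euler operator as a derivation. -/
noncomputable def eulerDerivation (n : ℕ) : Derivation ℂ (PolA n) (PolA n) :=
  ∑ i : Fin n, (X (Sum.inr i) : PolA n) • pderiv (Sum.inr i)

theorem Elin_eq_eulerDerivation : Elin n = (eulerDerivation n).toLinearMap := by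
  refine LinearMap.ext fun φ => ?_
  have hsum := congrFun (map_sum Derivation.coeFnAddMonoidHom
    (fun i : Fin n => (X (Sum.inr i) : PolA n) • (pderiv (Sum.inr i) : Derivation ℂ (PolA n) _))
    Finset.univ) φ
  rw [Finset.sum_apply] at hsum
  rw [Elin, LinearMap.sum_apply]
  exact hsum.symm

theorem eulerDerivation_X (v : Fin n ⊕ Fin n) :
    eulerDerivation n (X v) = (xiDeg (Finsupp.single v 1) : ℂ) • (X v : PolA n) := by
  rw [← Derivation.coeFn_coe, ← Elin_eq_eulerDerivation]
  exact Elin_monomial _ _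

theorem pderiv_mem_adEigenspace (v : Fin n ⊕ Fin n) :
    (pderiv v).toLinearMap ∈ adEigenspace (Elin n) (-xiDeg (Finsupp.single v 1) : ℂ) := by
  classical
  have hcomm : ⁅eulerDerivation n, (pderiv v : Derivation ℂ (PolA n) (PolA n))⁆ =
      (-xiDeg (Finsupp.single v 1) : ℂ) • pderiv v := by
    refine MvPolynomial.derivation_ext fun w => ?_
    rw [Derivation.commutator_apply, eulerDerivation_X]
    by_cases hvw : w = v
    · subst hvw
      simp
    · simp [pderiv_X_of_ne hvw]
  rw [mem_adEigenspace_iff, Elin_eq_eulerDerivation]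
  exact congrArg Derivation.toLinearMap hcomm

theorem pderiv_inl_mem_adEigenspace (i : Fin n) :
    (pderiv (Sum.inl i)).toLinearMap ∈ adEigenspace (Elin n) (0 : ℂ) := by
  simpa [xiDeg] using pderiv_mem_adEigenspace (Sum.inl i)

theorem pderiv_inr_mem_adEigenspace (i : Fin n) :
    (pderiv (Sum.inr i)).toLinearMap ∈ adEigenspace (Elin n) (-1 : ℂ) := by
  simpa [xiDeg, Finsupp.single_apply] using pderiv_mem_adEigenspace (Sum.inr i)

theorem Dlin_mem_adEigenspace : Dlin n ∈ adEigenspace (Elin n) (-1 : ℂ) :=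
  sum_mem fun i _ => zero_add (-1 : ℂ) ▸
    mul_mem_adEigenspace (pderiv_inl_mem_adEigenspace i) (pderiv_inr_mem_adEigenspace i)

theorem cEHom_mem_adEigenspace (c : ℕ → ℂ) : cEHom n c ∈ adEigenspace (Elin n) (0 : ℂ) := by
  rw [mem_adEigenspace_zero_iff, Elin_eq_cEHom]
  exact (Commute.all _ c).map (cEHom n)

theorem mulLeft_mem_adEigenspace {a : ℂ} {φ : PolA n} (hφ : φ ∈ (Elin n).eigenspace a) :
    LinearMap.mulLeft ℂ φ ∈ adEigenspace (Elin n) a := by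
  rw [Module.End.mem_eigenspace_iff] at hφ
  refine mem_adEigenspace_iff.mpr (LinearMap.ext fun ψ => ?_)
  calc ⁅Elin n, LinearMap.mulLeft ℂ φ⁆ ψ = Elin n (φ * ψ) - φ * Elin n ψ := rfl
    _ = Elin n φ * ψ := by
      simp only [Elin_eq_eulerDerivation, Derivation.coeFn_coe, Derivation.leibniz, smul_eq_mul]
      ring
    _ = (a • LinearMap.mulLeft ℂ φ) ψ := by rw [hφ, smul_mul_assoc]; rfl

theorem aeval_E'lin_mul {a : ℂ} {M : Module.End ℂ (PolA n)} (hM : M ∈ adEigenspace (Elin n) a)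
    (f : Polynomial ℂ) :
    Polynomial.aeval (E'lin n) f * M = M * Polynomial.aeval (E'lin n) (Polynomial.taylor a f) := by
  refine aeval_mul_of_mem_adEigenspace ?_ f
  rwa [E'lin_eq_add_algebraMap, adEigenspace_add_algebraMap]

end Weights

section WeylAlgebra

variable {n : ℕ}

theorem pderiv_mem_Weyl (v : Fin n ⊕ Fin n) : (pderiv v).toLinearMap ∈ Weyl n :=
  Algebra.subset_adjoin (Or.inr ⟨v, rfl⟩)

theorem mulLeft_X_mem_Weyl (v : Fin n ⊕ Fin n) : LinearMap.mulLeft ℂ (X v) ∈ Weyl n := by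
  rcases v with i | i
  · exact Algebra.subset_adjoin (Or.inl (Or.inl ⟨i, rfl⟩))
  · exact Algebra.subset_adjoin (Or.inl (Or.inr ⟨i, rfl⟩))

theorem mulLeft_mem_Weyl (φ : PolA n) : LinearMap.mulLeft ℂ φ ∈ Weyl n := by
  have hmem : φ ∈ (Weyl n).comap (Algebra.lmul ℂ (PolA n)) := by
    have hle : Algebra.adjoin ℂ (Set.range X) ≤ (Weyl n).comap (Algebra.lmul ℂ (PolA n)) :=
      Algebra.adjoin_le (Set.range_subset_iff.mpr mulLeft_X_mem_Weyl)
    exact hle (MvPolynomial.adjoin_range_X (R := ℂ) ▸ Algebra.mem_top)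
  exact hmem

theorem Dlin_mem_Weyl : Dlin n ∈ Weyl n :=
  sum_mem fun _ _ => mul_mem (pderiv_mem_Weyl _) (pderiv_mem_Weyl _)

theorem aeval_E'lin_mem_Weyl (f : Polynomial ℂ) : Polynomial.aeval (E'lin n) f ∈ Weyl n := by
  have hE : Elin n ∈ Weyl n :=
    sum_mem fun _ _ => mul_mem (mulLeft_X_mem_Weyl _) (pderiv_mem_Weyl _)
  have hE' : E'lin n ∈ Weyl n := add_mem hE ((Weyl n).smul_mem (one_mem _) _)
  exact Algebra.adjoin_le (Set.singleton_subset_iff.mpr hE')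
    (Polynomial.aeval_mem_adjoin_singleton ℂ (E'lin n))

end WeylAlgebra

section StarProduct

variable {n : ℕ}

theorem iterate_Dop (d : ℕ) (φ : PolA n) : Dop^[d] φ = (Dlin n ^ d) φ := by
  have hD : Dop = ⇑(Dlin n) := by
    funext ψ
    simp only [Dop, Dlin, LinearMap.sum_apply, LinearMap.comp_apply, Derivation.coeFn_coe]
  rw [hD, Module.End.pow_apply]

/-- The operator `bh^λ_d` as an endomorphism. -/
noncomputable def bhLin (n : ℕ) (lam : ℂ) (d : ℕ) : Module.End ℂ (PolA n) :=
  cEHom n (hScal n lam d) * Dlin n ^ d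

theorem bhLin_apply (lam : ℂ) (d : ℕ) (φ : PolA n) : bhLin n lam d φ = bh lam d φ := by
  rw [bh, iterate_Dop, ← cEHom_apply, bhLin, Module.End.mul_apply]

/-- The operator `bg^λ_d` as an endomorphism. -/
noncomputable def bgLin (n : ℕ) (lam : ℂ) (d : ℕ) : Module.End ℂ (PolA n) :=
  cEHom n (gScal n lam d) * Dlin n ^ d

theorem bgLin_apply (lam : ℂ) (d : ℕ) (φ : PolA n) : bgLin n lam d φ = bg lam d φ := by
  rw [bg, iterate_Dop, ← cEHom_apply, bgLin, Module.End.mul_apply]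

theorem cEHom_mul_Dlin_pow_mem_adEigenspace (c : ℕ → ℂ) (d : ℕ) :
    cEHom n c * Dlin n ^ d ∈ adEigenspace (Elin n) (-d : ℂ) := by
  simpa using mul_mem_adEigenspace (cEHom_mem_adEigenspace c)
    (pow_mem_adEigenspace Dlin_mem_adEigenspace d)

theorem bhLin_mem_adEigenspace (lam : ℂ) (d : ℕ) :
    bhLin n lam d ∈ adEigenspace (Elin n) (-d : ℂ) :=
  cEHom_mul_Dlin_pow_mem_adEigenspace _ d

theorem bgLin_mem_adEigenspace (lam : ℂ) (d : ℕ) :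
    bgLin n lam d ∈ adEigenspace (Elin n) (-d : ℂ) :=
  cEHom_mul_Dlin_pow_mem_adEigenspace _ d

/-- The iterated partial derivative `∂^k/∂x_{e(α₁)}⋯∂x_{e(α_k)}`, where `e` selects the variables:
`Sum.inl` for the `uᵢ` and `Sum.inr` for the `ξᵢ`. -/
noncomputable def iterPderiv (e : Fin n → Fin n ⊕ Fin n) (l : List (Fin n)) :
    Module.End ℂ (PolA n) :=
  (l.map fun i => (pderiv (e i)).toLinearMap).prod

theorem iterPderiv_apply (e : Fin n → Fin n ⊕ Fin n) (l : List (Fin n)) (φ : PolA n) :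
    iterPderiv e l φ = l.foldr (fun i acc => pderiv (e i) acc) φ := by
  induction l with
  | nil => rfl
  | cons i l ih => rw [List.foldr_cons, ← ih]; rfl

theorem iterPderiv_mem_adEigenspace {e : Fin n → Fin n ⊕ Fin n} {a : ℂ}
    (he : ∀ i, (pderiv (e i)).toLinearMap ∈ adEigenspace (Elin n) a) (l : List (Fin n)) :
    iterPderiv e l ∈ adEigenspace (Elin n) (l.length * a) := by
  rw [← List.length_map fun i => ((pderiv (e i)).toLinearMap : Module.End ℂ (PolA n))]
  exact list_prod_mem_adEigenspace _ (List.forall_mem_map.mpr fun i _ => he i)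

theorem iterPderiv_mem_Weyl (e : Fin n → Fin n ⊕ Fin n) (l : List (Fin n)) :
    iterPderiv e l ∈ Weyl n :=
  list_prod_mem (List.forall_mem_map.mpr fun _ _ => pderiv_mem_Weyl _)

/-- The operator `N_k(φ, ·)` as an endomorphism. -/
noncomputable def NLin (k : ℕ) (φ : PolA n) : Module.End ℂ (PolA n) :=
  (k.factorial : ℂ)⁻¹ • ∑ α : Fin k → Fin n,
    LinearMap.mulLeft ℂ (iterPderiv Sum.inr (List.ofFn α) φ) * iterPderiv Sum.inl (List.ofFn α)

theorem NLin_apply (k : ℕ) (φ ψ : PolA n) : NLin k φ ψ = Nop k φ ψ := by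
  simp only [NLin, Nop, LinearMap.smul_apply, LinearMap.sum_apply, Module.End.mul_apply,
    LinearMap.mulLeft_apply, iterPderiv_apply]

theorem NLin_mem_Weyl (k : ℕ) (φ : PolA n) : NLin k φ ∈ Weyl n :=
  (Weyl n).smul_mem (sum_mem fun _ _ => mul_mem (mulLeft_mem_Weyl _) (iterPderiv_mem_Weyl _ _)) _

theorem NLin_mem_adEigenspace (k : ℕ) {a : ℂ} {φ : PolA n} (hφ : φ ∈ (Elin n).eigenspace a) :
    NLin k φ ∈ adEigenspace (Elin n) (a - k) := by
  refine Submodule.smul_mem _ _ (sum_mem fun α _ => ?_)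
  have hinr := iterPderiv_mem_adEigenspace pderiv_inr_mem_adEigenspace (List.ofFn α)
  have hinl := iterPderiv_mem_adEigenspace pderiv_inl_mem_adEigenspace (List.ofFn α)
  convert mul_mem_adEigenspace (mulLeft_mem_adEigenspace (apply_mem_eigenspace_add hinr hφ)) hinl
    using 2
  rw [List.length_ofFn]
  ring

/-- The operator `C^λ_p(φ, ·)` as an endomorphism. -/
noncomputable def CLin (n : ℕ) (lam : ℂ) (p : ℕ) (φ : PolA n) : Module.End ℂ (PolA n) :=
  ∑ i ∈ Finset.range (p + 1), ∑ j ∈ Finset.range (p + 1),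
    ∑ k ∈ Finset.range (p + 1), ∑ m ∈ Finset.range (p + 1),
      if i + j + k + m = p then bgLin n lam m * NLin k (bhLin n lam i φ) * bhLin n lam j else 0

theorem CLin_apply (lam : ℂ) (p : ℕ) (φ ψ : PolA n) : CLin n lam p φ ψ = C n lam p φ ψ := by
  simp only [CLin, C, LinearMap.sum_apply, apply_ite (fun L : Module.End ℂ (PolA n) => L ψ),
    Module.End.mul_apply, LinearMap.zero_apply, bgLin_apply, NLin_apply, bhLin_apply]

end StarProduct

section DenominatorClearing

variable {n : ℕ}

/-- The polynomial `∏_{i=1}^{⌊p/2⌋} (X + i)`, whose value at `E'` is `T_p`. -/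
noncomputable def polyT (p : ℕ) : Polynomial ℂ :=
  ∏ i ∈ Finset.Icc 1 (p / 2), (Polynomial.X + Polynomial.C (i : ℂ))

/-- The polynomial `∏_{i=1}^{⌊p/2⌋} (X - i)`, whose value at `E'` is `S_p`. -/
noncomputable def polyS (p : ℕ) : Polynomial ℂ :=
  ∏ i ∈ Finset.Icc 1 (p / 2), (Polynomial.X - Polynomial.C (i : ℂ))

theorem eval_polyT (p : ℕ) (y : ℂ) :
    (polyT p).eval y = ∏ i ∈ Finset.Icc 1 (p / 2), (y + i) := by
  simp [polyT, Polynomial.eval_prod]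

theorem eval_polyS (p : ℕ) (y : ℂ) :
    (polyS p).eval y = ∏ i ∈ Finset.Icc 1 (p / 2), (y - i) := by
  simp [polyS, Polynomial.eval_prod]

theorem gScal_half (m k : ℕ) :
    gScal n (1 / 2) m k = (m.factorial : ℂ)⁻¹ * (-1) ^ m * halfRatio 1 m ((k : ℂ) + n / 2) := by
  rw [gScal, halfRatio, mul_assoc, ← Finset.card_range m, ← Finset.prod_const, Finset.card_range,
    ← Finset.prod_mul_distrib]
  refine congrArg _ (Finset.prod_congr rfl fun j _ => ?_)
  rw [← mul_div_assoc]
  congr 1 <;> push_cast <;> ring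

theorem hScal_half (m k : ℕ) :
    hScal n (1 / 2) m k = (m.factorial : ℂ)⁻¹ * halfRatio m m ((k : ℂ) + n / 2) := by
  rw [hScal, halfRatio]
  refine congrArg _ (Finset.prod_congr rfl fun j _ => ?_)
  congr 1 <;> ring

theorem aeval_mul_cEHom_mem_Weyl {a m : ℕ} (ha : a ≤ m + 1) (hma : 0 < m → 0 < a)
    (F : Polynomial ℂ) (hF : ∀ t : ℕ, a ≤ 2 * t → 2 * t < a + m → F.IsRoot (-t)) (r : ℂ) :
    Polynomial.aeval (E'lin n) F * cEHom n (fun k => r * halfRatio a m ((k : ℂ) + n / 2)) ∈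
      Weyl n := by
  obtain ⟨f, hf⟩ := exists_eval_eq_mul_halfRatio ha F hF
  suffices hpoly : Polynomial.aeval (E'lin n) F *
      cEHom n (fun k => r * halfRatio a m ((k : ℂ) + n / 2)) =
      Polynomial.aeval (E'lin n) (Polynomial.C r * f) from hpoly ▸ aeval_E'lin_mem_Weyl _
  rw [aeval_E'lin, aeval_E'lin, ← map_mul]
  congr 1
  funext k
  have hden : ∀ j < m, 2 * ((k : ℂ) + n / 2) + j + a ≠ 0 := fun j hj => by
    have hpos : 2 * k + n + j + a ≠ 0 := by lia
    convert Nat.cast_ne_zero (R := ℂ).mpr hpos using 1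
    push_cast; ring
  rw [Pi.mul_apply, Polynomial.eval_mul, Polynomial.eval_C, hf _ hden]
  ring

theorem aeval_polyT_mul_bgLin_mem_Weyl {m p : ℕ} (hm : m ≤ p) :
    Polynomial.aeval (E'lin n) (polyT p) * bgLin n (1 / 2) m ∈ Weyl n := by
  rw [bgLin, funext (gScal_half m), ← mul_assoc]
  refine mul_mem (aeval_mul_cEHom_mem_Weyl (by lia) (by lia) _ (fun t h₁ h₂ => ?_) _)
    (pow_mem Dlin_mem_Weyl m)
  rw [Polynomial.IsRoot.def, eval_polyT]
  exact Finset.prod_eq_zero (i := t) (Finset.mem_Icc.mpr (by lia)) (neg_add_cancel _)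

theorem aeval_taylor_polyS_mul_bhLin_mem_Weyl {j p : ℕ} (hj : j ≤ p) :
    Polynomial.aeval (E'lin n) (Polynomial.taylor (j : ℂ) (polyS p)) * bhLin n (1 / 2) j ∈
      Weyl n := by
  rw [bhLin, funext (hScal_half j), ← mul_assoc]
  refine mul_mem (aeval_mul_cEHom_mem_Weyl (by lia) id _ (fun t h₁ h₂ => ?_) _)
    (pow_mem Dlin_mem_Weyl j)
  rw [Polynomial.IsRoot.def, Polynomial.taylor_eval, eval_polyS]
  refine Finset.prod_eq_zero (i := j - t) (Finset.mem_Icc.mpr (by lia)) ?_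
  rw [Nat.cast_sub (by lia)]
  ring

theorem aeval_mul_bgLin_mul_bhLin_mem_Weyl {j m p : ℕ} (hj : j ≤ p) (hm : m ≤ p)
    {M : Module.End ℂ (PolA n)} (hM : M ∈ Weyl n) {a c : ℂ} (hMa : M ∈ adEigenspace (Elin n) a)
    (hc : -m + a + c = j) :
    Polynomial.aeval (E'lin n) (polyT p * Polynomial.taylor c (polyS p)) *
      (bgLin n (1 / 2) m * M * bhLin n (1 / 2) j) ∈ Weyl n := by
  have hshift : Polynomial.aeval (E'lin n) (Polynomial.taylor c (polyS p)) *
      (bgLin n (1 / 2) m * M) =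
      bgLin n (1 / 2) m * M * Polynomial.aeval (E'lin n) (Polynomial.taylor (j : ℂ) (polyS p)) := by
    rw [aeval_E'lin_mul (mul_mem_adEigenspace (bgLin_mem_adEigenspace _ m) hMa),
      Polynomial.taylor_taylor, hc]
  have hsplit : Polynomial.aeval (E'lin n) (polyT p * Polynomial.taylor c (polyS p)) *
      (bgLin n (1 / 2) m * M * bhLin n (1 / 2) j) =
      Polynomial.aeval (E'lin n) (polyT p) * bgLin n (1 / 2) m * M *
        (Polynomial.aeval (E'lin n) (Polynomial.taylor (j : ℂ) (polyS p)) *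
          bhLin n (1 / 2) j) := by
    rw [map_mul, mul_assoc, ← mul_assoc _ _ (bhLin n (1 / 2) j), hshift]
    simp only [mul_assoc]
  rw [hsplit]
  exact mul_mem (mul_mem (aeval_polyT_mul_bgLin_mem_Weyl hm) hM)
    (aeval_taylor_polyS_mul_bhLin_mem_Weyl hj)

theorem aeval_mul_CLin_mem_Weyl (p : ℕ) {a : ℂ} {φ : PolA n} (hφ : φ ∈ (Elin n).eigenspace a) :
    Polynomial.aeval (E'lin n) (polyT p * Polynomial.taylor (p - a) (polyS p)) *
      CLin n (1 / 2) p φ ∈ Weyl n := by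
  simp only [CLin, Finset.mul_sum]
  refine sum_mem fun i _ => sum_mem fun j _ => sum_mem fun k _ => sum_mem fun m _ => ?_
  split_ifs with hp
  · have hbh : bhLin n (1 / 2) i φ ∈ (Elin n).eigenspace (-i + a) :=
      apply_mem_eigenspace_add (bhLin_mem_adEigenspace _ i) hφ
    refine aeval_mul_bgLin_mul_bhLin_mem_Weyl (by lia) (by lia) (NLin_mem_Weyl k _)
      (NLin_mem_adEigenspace k hbh) ?_
    rw [← hp]
    push_cast
    ring
  · rw [mul_zero]
    exact zero_mem _

end DenominatorClearing

end LO

theorem stmt_18_general (n p d : ℕ) (φ : PolA n) (hφ : LO.IsXiHomog (d : ℤ) φ) :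
    ∃ L ∈ LO.Weyl n, ∀ ψ : PolA n,
      LO.cE (fun k => ∏ i ∈ Finset.Icc 1 (p / 2),
          (((k : ℂ) + (n : ℂ) / 2 + (i : ℂ)) *
            ((k : ℂ) + (n : ℂ) / 2 + (p : ℂ) - (d : ℂ) - (i : ℂ))))
        (LO.C n (1 / 2) p φ ψ) = L ψ := by
  refine ⟨_, LO.aeval_mul_CLin_mem_Weyl p (LO.isXiHomog_iff_mem_eigenspace.mp hφ), fun ψ => ?_⟩
  rw [Module.End.mul_apply, LO.CLin_apply, LO.aeval_E'lin, LO.cEHom_apply]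
  congr 1
  funext k
  rw [Polynomial.eval_mul, Polynomial.taylor_eval, LO.eval_polyT, LO.eval_polyS,
    ← Finset.prod_mul_distrib]
  refine Finset.prod_congr rfl fun i _ => ?_
  push_cast
  ring

/-- Corollary 8: for `n` odd, `p ≥ 1` and `φ ∈ A^d`, there is a
differential operator `L` with polynomial coefficients such that
`(∏_{i=1}^{⌊p/2⌋}(E'+i)(E'+p−d−i))(C^{1/2}_p(φ,ψ)) = Lψ` for all `ψ`. -/
theorem stmt_18 (n : ℕ) (hn : Odd n) (p : ℕ) (hp : 1 ≤ p) (d : ℕ) (φ : PolA n)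
    (hφ : LO.IsXiHomog (d : ℤ) φ) :
    ∃ L ∈ LO.Weyl n, ∀ ψ : PolA n,
      LO.cE (fun k => ∏ i ∈ Finset.Icc 1 (p / 2),
          (((k : ℂ) + (n : ℂ) / 2 + (i : ℂ)) *
            ((k : ℂ) + (n : ℂ) / 2 + (p : ℂ) - (d : ℂ) - (i : ℂ))))
        (LO.C n (1 / 2) p φ ψ) = L ψ :=
  stmt_18_general n p d φ hφ
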